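/- Fix constants 0 < q < p < 1. There exist constants L₂ > 0 and L₃ > 0 such that for all sufficiently large n and all integers Δ with 1 ≤ Δ ≤ n/L₂, the following holds: if S ~ Bin(n, q) and D₊ ~ Bin(n+Δ−1, p) are independent, then P[S = D₊] ≥ (1 + 1/L₃)·P[S = D₊ + 1]. -/

import Mathlib

/-!
Write `f` and `g` for the mass functions of `Bin(n, q)` and `Bin(m, p)`, where `m = n + Δ - 1 ≥ n`.
Then `P[S = D] = ∑ f k * g k` and `P[S = D + 1] = ∑ f (k + 1) * g k`. Comparing consecutive
binomial weights gives
`(f (k + 1) / f k) * (g k / g (k + 1)) = (n - k) / (m - k) * (q (1 - p)) / (p (1 - q)) ≤ ρ`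
with `ρ = q (1 - p) / (p (1 - q)) < 1` (`binomPMF_cross_le`). Hence, since
`(f (k + 1) * g k) ^ 2 ≤ ρ * (f k * g k) * (f (k + 1) * g (k + 1))`, AM-GM bounds `f (k + 1) * g k`
by `√ρ` times the average of two neighbouring terms of `P[S = D]` (`binomPMF_shift_le`). Summing
over `k` gives `P[S = D + 1] ≤ √ρ * P[S = D]` for every `n` and every `Δ ≥ 1`.
-/

open Finset

/-- Probability mass function of the binomial distribution `Bin(m, r)`. -/
noncomputable def binomPMF (m : ℕ) (r : ℝ) (k : ℕ) : ℝ :=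
  (m.choose k : ℝ) * r ^ k * (1 - r) ^ (m - k)

/-- `P[X ∈ P]` for `X ~ Bin(m, r)`. -/
noncomputable def binomProb (m : ℕ) (r : ℝ) (P : ℕ → Prop) : ℝ :=
  ∑ k ∈ Finset.range (m + 1), Set.indicator {k | P k} (binomPMF m r) k

/-- `P[(X, Y) ∈ P]` for independent `X ~ Bin(m₁, r₁)` and `Y ~ Bin(m₂, r₂)`. -/
noncomputable def binomProb2 (m₁ : ℕ) (r₁ : ℝ) (m₂ : ℕ) (r₂ : ℝ) (P : ℕ → ℕ → Prop) : ℝ :=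
  ∑ j ∈ Finset.range (m₁ + 1), ∑ k ∈ Finset.range (m₂ + 1),
    Set.indicator {jk : ℕ × ℕ | P jk.1 jk.2}
      (fun jk => binomPMF m₁ r₁ jk.1 * binomPMF m₂ r₂ jk.2) (j, k)

theorem binomPMF_nonneg {m : ℕ} {r : ℝ} (h0 : 0 ≤ r) (h1 : r ≤ 1) (k : ℕ) :
    0 ≤ binomPMF m r k := by
  have : 0 ≤ 1 - r := by linarith
  unfold binomPMF
  positivity

/-- Consecutive binomial weights, with denominators cleared. -/
theorem binomPMF_succ {m k : ℕ} (r : ℝ) (hk : k < m) :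
    ((k : ℝ) + 1) * (1 - r) * binomPMF m r (k + 1) = ((m : ℝ) - k) * r * binomPMF m r k := by
  have hc : (m.choose (k + 1) : ℝ) * ((k : ℝ) + 1) = m.choose k * ((m : ℝ) - k) := by
    rw [← Nat.cast_sub hk.le]
    exact_mod_cast Nat.choose_succ_right_eq m k
  have he : m - k = (m - (k + 1)) + 1 := by omega
  unfold binomPMF
  rw [he, pow_succ, pow_succ]
  linear_combination (r ^ k * r * (1 - r) ^ (m - (k + 1)) * (1 - r)) * hc

theorem binomPMF_cross_le {n m k : ℕ} {p q : ℝ} (hq : 0 < q) (hqp : q < p) (hp : p < 1)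
    (hnm : n ≤ m) (hk : k < n) :
    p * (1 - q) * (binomPMF n q (k + 1) * binomPMF m p k)
      ≤ q * (1 - p) * (binomPMF n q k * binomPMF m p (k + 1)) := by
  have hf := binomPMF_succ q hk
  have hg := binomPMF_succ p (hk.trans_le hnm)
  have hkm : (k : ℝ) < m := by exact_mod_cast hk.trans_le hnm
  have hnm' : (n : ℝ) ≤ m := by exact_mod_cast hnm
  have hf0 := binomPMF_nonneg (m := n) hq.le (hqp.trans hp).le k
  have hg1 := binomPMF_nonneg (m := m) (hq.trans hqp).le hp.le (k + 1)
  have hp' : 0 ≤ 1 - p := by linarith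
  have hpos : 0 < ((k : ℝ) + 1) * ((m : ℝ) - k) := mul_pos (by positivity) (by linarith)
  have hY : 0 ≤ ((k : ℝ) + 1) * (q * (1 - p) * (binomPMF n q k * binomPMF m p (k + 1))) := by
    positivity
  refine le_of_mul_le_mul_left ?_ hpos
  calc _ = ((n : ℝ) - k) *
          (((k : ℝ) + 1) * (q * (1 - p) * (binomPMF n q k * binomPMF m p (k + 1)))) := by
        linear_combination (p * ((m : ℝ) - k) * binomPMF m p k) * hf
          - (((n : ℝ) - k) * q * binomPMF n q k) * hg
    _ ≤ ((m : ℝ) - k) *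
          (((k : ℝ) + 1) * (q * (1 - p) * (binomPMF n q k * binomPMF m p (k + 1)))) :=
        mul_le_mul_of_nonneg_right (by linarith) hY
    _ = _ := by ring

theorem binomPMF_shift_le {n m k : ℕ} {p q s : ℝ} (hq : 0 < q) (hqp : q < p) (hp : p < 1)
    (hnm : n ≤ m) (hk : k < n) (hs : 0 ≤ s) (hs2 : s ^ 2 = q * (1 - p) / (p * (1 - q))) :
    binomPMF n q (k + 1) * binomPMF m p k
      ≤ s * ((binomPMF n q k * binomPMF m p k
          + binomPMF n q (k + 1) * binomPMF m p (k + 1)) / 2) := by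
  have hcross := binomPMF_cross_le hq hqp hp hnm hk
  have hf0 := binomPMF_nonneg (m := n) hq.le (hqp.trans hp).le k
  have hf1 := binomPMF_nonneg (m := n) hq.le (hqp.trans hp).le (k + 1)
  have hg0 := binomPMF_nonneg (m := m) (hq.trans hqp).le hp.le k
  have hg1 := binomPMF_nonneg (m := m) (hq.trans hqp).le hp.le (k + 1)
  have hd : 0 < p * (1 - q) := mul_pos (by linarith) (by linarith)
  generalize binomPMF n q k = f₀ at *
  generalize binomPMF n q (k + 1) = f₁ at *
  generalize binomPMF m p k = g₀ at *
  generalize binomPMF m p (k + 1) = g₁ at *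
  have hr : f₁ * g₀ ≤ s ^ 2 * (f₀ * g₁) := by
    rw [hs2, div_mul_eq_mul_div, le_div_iff₀ hd]
    linarith
  refine le_of_sq_le_sq ?_ (by positivity)
  calc (f₁ * g₀) ^ 2 = (f₁ * g₀) * (f₁ * g₀) := by ring
    _ ≤ (s ^ 2 * (f₀ * g₁)) * (f₁ * g₀) := mul_le_mul_of_nonneg_right hr (by positivity)
    _ = s ^ 2 * ((f₀ * g₀) * (f₁ * g₁)) := by ring
    _ ≤ s ^ 2 * ((f₀ * g₀ + f₁ * g₁) / 2) ^ 2 :=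
        mul_le_mul_of_nonneg_left (by nlinarith [sq_nonneg (f₀ * g₀ - f₁ * g₁)]) (sq_nonneg s)
    _ = _ := by ring

theorem binomProb2_eq {n m : ℕ} (hnm : n ≤ m) (q p : ℝ) :
    binomProb2 n q m p (fun s d => s = d)
      = ∑ k ∈ range (n + 1), binomPMF n q k * binomPMF m p k := by
  refine sum_congr rfl fun j hj => ?_
  have hj' : j ∈ range (m + 1) := by simp at hj ⊢; omega
  simp only [Set.indicator_apply, Set.mem_ofPred_eq]
  rw [sum_ite_eq, if_pos hj']

theorem binomProb2_eq_succ {n m : ℕ} (hnm : n ≤ m) (q p : ℝ) :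
    binomProb2 n q m p (fun s d => s = d + 1)
      = ∑ k ∈ range n, binomPMF n q (k + 1) * binomPMF m p k := by
  unfold binomProb2
  -- `S = 0` never equals `D + 1`, so only the values `S = k + 1` with `k < n` contribute.
  rw [sum_range_succ']
  simp only [Set.indicator_apply, Set.mem_ofPred_eq, add_left_inj]
  have h0 : ∀ k : ℕ, ¬ (0 = k + 1) := by omega
  simp only [h0, if_false, sum_const_zero, add_zero]
  refine sum_congr rfl fun j hj => ?_
  have hj' : j ∈ range (m + 1) := by simp at hj ⊢; omega
  rw [sum_ite_eq, if_pos hj']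

theorem binomProb2_shift_le {n m : ℕ} {p q s : ℝ} (hq : 0 < q) (hqp : q < p) (hp : p < 1)
    (hnm : n ≤ m) (hs : 0 ≤ s) (hs2 : s ^ 2 = q * (1 - p) / (p * (1 - q))) :
    binomProb2 n q m p (fun s d => s = d + 1) ≤ s * binomProb2 n q m p (fun s d => s = d) := by
  rw [binomProb2_eq hnm, binomProb2_eq_succ hnm]
  have hnn : ∀ k, 0 ≤ binomPMF n q k * binomPMF m p k := fun k =>
    mul_nonneg (binomPMF_nonneg hq.le (hqp.trans hp).le k)
      (binomPMF_nonneg (hq.trans hqp).le hp.le k)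
  have hsum := sum_le_sum fun k hk =>
    binomPMF_shift_le hq hqp hp hnm (mem_range.1 hk) hs hs2
  rw [← mul_sum, ← sum_div, sum_add_distrib] at hsum
  refine hsum.trans (mul_le_mul_of_nonneg_left ?_ hs)
  have h1 := sum_range_succ (fun k => binomPMF n q k * binomPMF m p k) n
  have h2 := sum_range_succ' (fun k => binomPMF n q k * binomPMF m p k) n
  have := hnn 0
  have := hnn n
  linarith

/-- equation (3.5) / `eq:S_Decay` in Lemma 3.6.
Fix constants `0 < q < p < 1`.  There exist constants `L₂ > 0` and `L₃ > 0` such that for all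
sufficiently large `n` and all integers `Δ` with `1 ≤ Δ ≤ n/L₂`: if `S ~ Bin(n, q)` and
`D₊ ~ Bin(n+Δ−1, p)` are independent, then `P[S = D₊] ≥ (1 + 1/L₃)·P[S = D₊ + 1]`. -/
theorem binomial_equal_vs_shifted_ratio
    (p q : ℝ) (hq : 0 < q) (hqp : q < p) (hp : p < 1) :
    ∃ L₂ : ℝ, 0 < L₂ ∧ ∃ L₃ : ℝ, 0 < L₃ ∧ ∃ N : ℕ, ∀ n : ℕ, N ≤ n →
      ∀ Δ : ℕ, 1 ≤ Δ → (Δ : ℝ) ≤ (n : ℝ) / L₂ →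
        binomProb2 n q (n + Δ - 1) p (fun s d => s = d)
          ≥ (1 + 1 / L₃) * binomProb2 n q (n + Δ - 1) p (fun s d => s = d + 1) := by
  have hd : 0 < p * (1 - q) := mul_pos (by linarith) (by linarith)
  have hc : 0 < q * (1 - p) := mul_pos hq (by linarith)
  obtain ⟨s, hs, hs1, hs2⟩ :
      ∃ s : ℝ, 0 < s ∧ s < 1 ∧ s ^ 2 = q * (1 - p) / (p * (1 - q)) := by
    refine ⟨√(q * (1 - p) / (p * (1 - q))), Real.sqrt_pos.2 (div_pos hc hd), ?_,
      Real.sq_sqrt (div_pos hc hd).le⟩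
    rw [Real.sqrt_lt' one_pos, one_pow, div_lt_one hd]
    linarith
  -- With this `L₃` the factor `1 + 1 / L₃` is exactly `s⁻¹`.
  refine ⟨1, one_pos, s / (1 - s), div_pos hs (by linarith), 0, fun n _ Δ hΔ _ => ?_⟩
  have hL : 1 + 1 / (s / (1 - s)) = s⁻¹ := by
    have : 1 - s ≠ 0 := by linarith
    field_simp
    ring
  rw [hL, ge_iff_le, inv_mul_le_iff₀ hs]
  exact binomProb2_shift_le hq hqp hp (by omega) hs.le hs2
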